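/- arXiv:2412.20449 — 4 statements merged into one kernel-verified Lean document; each statement's English description precedes it below -/
import Mathlib

section
/- For a route with inflow demand φ strictly less than the route capacity z̄ := min_l f̄_l, there exists a unique consistent density vector, namely the free-flow vector x_l = φ/v_l for every link l = 1,…,n, and at this vector every link flow f_0, f_1, …, f_n equals φ. -/
/-!
Let `z` be the common flow of a consistent vector; `z ≤ φ`, so `z` is below every capacity.
The last link discharges its demand, so `v x = z` there, i.e. the link is uncongested. An
uncongested link offers its full capacity as supply (`Route.supply_eq_fbar`), which exceeds `z`,
so the flow leaving the preceding link must again be that link's demand. This propagates upstream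
through the route (`Route.freeflow_of_outflow_eq`); at the entrance the supply exceeds `φ`,
whence `z = φ`. Conversely, at the free-flow vector each demand is `φ` and each supply is a
full capacity.
-/

/-!
Selfish routing on a single route with supply/demand (CTM) link mechanics.
A route consists of links `0, …, n-1` (paper indices `1, …, n`).
-/

open Finset

noncomputable section

namespace SelfishRouting

/-- A route with `n` links, each specified by jam density `xbar`, capacity `fbar`,
free-flow speed `v` and length `L`, with the critical density `fbar l / v l`
strictly below the jam density. -/
structure Route (n : ℕ) where
  xbar : Fin n → ℝ
  fbar : Fin n → ℝ
  v : Fin n → ℝ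
  L : Fin n → ℝ
  xbar_pos : ∀ l, 0 < xbar l
  fbar_pos : ∀ l, 0 < fbar l
  v_pos : ∀ l, 0 < v l
  L_pos : ∀ l, 0 < L l
  crit_lt_jam : ∀ l, fbar l / v l < xbar l

namespace Route

variable {n : ℕ} (r : Route n)

/-- critical density of link `l`. -/
def xc (l : Fin n) : ℝ := r.fbar l / r.v l

/-- congestion-wave speed of link `l`. -/
def w (l : Fin n) : ℝ := r.fbar l / (r.xbar l - r.xc l)

/-- supply function of link `l`. -/
def supply (l : Fin n) (x : ℝ) : ℝ := min (r.fbar l) (r.w l * (r.xbar l - x))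

/-- demand function of link `l`. -/
def demand (l : Fin n) (x : ℝ) : ℝ := min (r.v l * x) (r.fbar l)

/-- route capacity `z̄ = min_l f̄_l`. -/
def cap (hn : 0 < n) : ℝ :=
  (Finset.univ : Finset (Fin n)).inf' ⟨⟨0, hn⟩, Finset.mem_univ _⟩ r.fbar

/-- flow `f_0` entering the first link of the route, under inflow demand `φ`. -/
def inflow (hn : 0 < n) (φ : ℝ) (x : Fin n → ℝ) : ℝ :=
  min φ (r.supply ⟨0, hn⟩ (x ⟨0, hn⟩))

/-- flow `f_{l+1}` leaving link `l`. -/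
def outflow (x : Fin n → ℝ) (l : Fin n) : ℝ :=
  if h : (l : ℕ) + 1 < n then
    min (r.demand l (x l)) (r.supply ⟨(l : ℕ) + 1, h⟩ (x ⟨(l : ℕ) + 1, h⟩))
  else r.demand l (x l)

/-- `x` lies in the box `∏_l [0, x̄_l]`. -/
def InBox (x : Fin n → ℝ) : Prop := ∀ l, 0 ≤ x l ∧ x l ≤ r.xbar l

/-- `x` is a consistent density vector for inflow demand `φ`:
all link flows `f_0 = f_1 = ⋯ = f_n` coincide. -/
def Consistent (hn : 0 < n) (φ : ℝ) (x : Fin n → ℝ) : Prop :=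
  r.InBox x ∧ ∀ l, r.outflow x l = r.inflow hn φ x

/-- travel time of link `l` at density `x`. -/
def tauLink (l : Fin n) (x : ℝ) : ℝ :=
  if x = 0 then r.L l / r.v l
  else r.L l * x / min (r.v l * x) (r.w l * (r.xbar l - x))

/-- route travel time. -/
def tau (x : Fin n → ℝ) : ℝ := ∑ l, r.tauLink l (x l)

/-- free-flow route travel time. -/
def tauF : ℝ := ∑ l, r.L l / r.v l

/-- maximal route travel time `τ^S`, given the bottleneck link `b`. -/
def tauS (hn : 0 < n) (b : Fin n) : ℝ :=
  ∑ l : Fin n, if (l : ℕ) < (b : ℕ) then r.tauLink l (r.xbar l - r.cap hn / r.w l)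
       else r.L l / r.v l

end Route

end SelfishRouting

end

namespace SelfishRouting

/-- At or below the critical density, the supply of a link is its capacity. -/
theorem Route.supply_eq_fbar {n : ℕ} (r : Route n) (l : Fin n) {x : ℝ}
    (hx : r.v l * x ≤ r.fbar l) : r.supply l x = r.fbar l := by
  have hpos : 0 < r.xbar l - r.xc l := sub_pos.mpr (r.crit_lt_jam l)
  have hxc : x ≤ r.xc l := by
    rw [Route.xc, le_div_iff₀ (r.v_pos l), mul_comm]
    exact hx
  refine min_eq_left ?_
  rw [Route.w, div_mul_eq_mul_div, le_div_iff₀ hpos]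
  exact mul_le_mul_of_nonneg_left (by linarith) (r.fbar_pos l).le

theorem Route.mul_eq_of_demand_eq {n : ℕ} (r : Route n) (l : Fin n) {x z : ℝ}
    (hz : z < r.fbar l) (h : r.demand l x = z) : r.v l * x = z := by
  rcases min_choice (r.v l * x) (r.fbar l) with h' | h' <;>
    simp only [Route.demand, h'] at h
  · exact h
  · exact absurd h hz.ne'

/-- If every link discharges the same flow `z`, below all capacities, then every link is in
free flow. The induction runs upstream from the last link. -/
theorem Route.freeflow_of_outflow_eq {n : ℕ} (r : Route n) {x : Fin n → ℝ} {z : ℝ}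
    (hz : ∀ l, z < r.fbar l) (h : ∀ l, r.outflow x l = z) (l : Fin n) :
    r.v l * x l = z := by
  apply r.mul_eq_of_demand_eq l (hz l)
  have hl := h l
  by_cases hlt : (l : ℕ) + 1 < n
  · have ih := Route.freeflow_of_outflow_eq r hz h ⟨(l : ℕ) + 1, hlt⟩
    have hs := r.supply_eq_fbar ⟨(l : ℕ) + 1, hlt⟩ (ih.le.trans (hz _).le)
    simp only [Route.outflow, hlt, dif_pos, hs] at hl
    rcases min_choice (r.demand l (x l)) (r.fbar ⟨(l : ℕ) + 1, hlt⟩) with h' | h'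
    · exact h'.symm.trans hl
    · exact absurd (h'.symm.trans hl) (hz _).ne'
  · simpa only [Route.outflow, hlt, dif_neg, not_false_eq_true] using hl
termination_by n - (l : ℕ)

/-- For a route with inflow demand `φ` strictly below the route
capacity `z̄ = min_l f̄_l`, the free-flow vector `x_l = φ / v_l` is the unique
consistent density vector, and at it every link flow equals `φ`. -/
theorem freeflow_unique_consistent {n : ℕ} (hn : 0 < n) (r : Route n) (b : Fin n)
    (hb : ∀ l, l ≠ b → r.fbar b < r.fbar l)
    (φ : ℝ) (hφ0 : 0 ≤ φ) (hφ : φ < r.cap hn) :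
    (∀ x : Fin n → ℝ, r.Consistent hn φ x ↔ x = fun l => φ / r.v l) ∧
    r.inflow hn φ (fun l => φ / r.v l) = φ ∧
    (∀ l, r.outflow (fun l => φ / r.v l) l = φ) := by
  have hcap : ∀ l, φ < r.fbar l := fun l =>
    hφ.trans_le (Finset.inf'_le r.fbar (Finset.mem_univ l))
  have hmul : ∀ l, r.v l * (φ / r.v l) = φ := fun l => mul_div_cancel₀ φ (r.v_pos l).ne'
  have hsup : ∀ l, r.supply l (φ / r.v l) = r.fbar l := fun l =>
    r.supply_eq_fbar l ((hmul l).le.trans (hcap l).le)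
  have hdem : ∀ l, r.demand l (φ / r.v l) = φ := fun l => by
    rw [Route.demand, hmul, min_eq_left (hcap l).le]
  have hin : r.inflow hn φ (fun l => φ / r.v l) = φ := by
    rw [Route.inflow, hsup, min_eq_left (hcap _).le]
  have hout : ∀ l, r.outflow (fun l => φ / r.v l) l = φ := fun l => by
    unfold Route.outflow
    split_ifs with hlt
    · rw [hdem, hsup, min_eq_left (hcap _).le]
    · exact hdem l
  refine ⟨fun x => ⟨fun ⟨_, hx⟩ => ?_, ?_⟩, hin, hout⟩
  · have hz : ∀ l, r.inflow hn φ x < r.fbar l := fun l => (min_le_left _ _).trans_lt (hcap l)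
    have hfree := r.freeflow_of_outflow_eq hz hx
    have hφz : r.inflow hn φ x = φ := by
      rw [Route.inflow, r.supply_eq_fbar _ ((hfree _).le.trans (hz _).le),
        min_eq_left (hcap _).le]
    funext l
    rw [eq_div_iff (r.v_pos l).ne', mul_comm, hfree l, hφz]
  · rintro rfl
    refine ⟨fun l => ⟨div_nonneg hφ0 (r.v_pos l).le, ?_⟩, fun l => (hout l).trans hin.symm⟩
    exact (div_le_div_of_nonneg_right (hcap l).le (r.v_pos l).le).trans (r.crit_lt_jam l).le

end SelfishRouting
end

section
/- For a route with inflow demand φ strictly greater than the route capacity z̄ := min_l f̄_l, there exists a unique consistent density vector, namely x_l = x̄_l − z̄/w_l for links l = 1,…,b−1 (upstream of the unique minimum-capacity link b) and x_l = z̄/v_l for links l = b,…,n, and at this vector every link flow f_0, f_1, …, f_n equals z̄; in particular only the amount z̄ < φ of the inflow demand is transferred. -/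
/-!
Every flow of a consistent vector equals some `z`, and `z ≤ z̄ = f̄_b < φ`, so the entry flow is the
supply of the first link. A link whose supply equals `z < f̄_l` is congested, so its demand is
`f̄_l > z` and the flow leaving it must be the supply of the next link: congestion propagates
downstream (`supply_succ`). If `z < f̄_b`, it reaches the exit, where the outflow is the
full capacity of the last link, a contradiction; hence `z = z̄`. Congestion then reaches exactly
the links before `b`, and the supply of `b` is `f̄_b`. Symmetrically, free flow propagates upstream
from the exit (`demand_pred`) to all links after `b`, and the demand of `b` is `f̄_b`. So `b` is at
its critical density, and the supply (before `b`) or demand (after `b`) determines the other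
densities.
-/

/-!
Selfish routing on a single route with supply/demand (CTM) link mechanics.
A route consists of links `0, …, n-1` (paper indices `1, …, n`).
-/

open Finset

namespace SelfishRouting

namespace Route

/-- The congested density vector for an over-demanded route with bottleneck `b`:
links upstream of `b` are congested at `x̄_l − z̄/w_l`, links from `b` onwards are
in free flow at `z̄/v_l`. -/
noncomputable def congestedVector {n : ℕ} (r : Route n) (hn : 0 < n) (b : Fin n) : Fin n → ℝ :=
  fun l => if (l : ℕ) < (b : ℕ) then r.xbar l - r.cap hn / r.w l else r.cap hn / r.v l

/-! ### Supply and demand of a single link -/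

section Helpers

variable {n : ℕ} (r : Route n)

lemma xbar_sub_xc_pos (l : Fin n) : 0 < r.xbar l - r.xc l :=
  sub_pos.2 (r.crit_lt_jam l)

lemma w_pos (l : Fin n) : 0 < r.w l :=
  div_pos (r.fbar_pos l) (r.xbar_sub_xc_pos l)

lemma v_mul_xc (l : Fin n) : r.v l * r.xc l = r.fbar l :=
  mul_div_cancel₀ _ (r.v_pos l).ne'

lemma w_mul_sub_xc (l : Fin n) : r.w l * (r.xbar l - r.xc l) = r.fbar l :=
  div_mul_cancel₀ _ (r.xbar_sub_xc_pos l).ne'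

lemma supply_le (l : Fin n) (x : ℝ) : r.supply l x ≤ r.fbar l := min_le_left _ _

lemma demand_le (l : Fin n) (x : ℝ) : r.demand l x ≤ r.fbar l := min_le_right _ _

lemma demand_eq_fbar {l : Fin n} {x : ℝ} (h : r.xc l ≤ x) : r.demand l x = r.fbar l := by
  refine min_eq_right ?_
  rw [← r.v_mul_xc l]
  exact mul_le_mul_of_nonneg_left h (r.v_pos l).le

lemma supply_eq_fbar_s1 {l : Fin n} {x : ℝ} (h : x ≤ r.xc l) : r.supply l x = r.fbar l := by
  refine min_eq_left ?_
  rw [← r.w_mul_sub_xc l]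
  exact mul_le_mul_of_nonneg_left (by linarith) (r.w_pos l).le

lemma xc_le_of_demand {l : Fin n} {x : ℝ} (h : r.fbar l ≤ r.demand l x) : r.xc l ≤ x := by
  have h1 : r.fbar l ≤ r.v l * x := h.trans (min_le_left _ _)
  rw [← r.v_mul_xc l] at h1
  exact le_of_mul_le_mul_left h1 (r.v_pos l)

lemma le_xc_of_supply {l : Fin n} {x : ℝ} (h : r.fbar l ≤ r.supply l x) : x ≤ r.xc l := by
  have h1 : r.fbar l ≤ r.w l * (r.xbar l - x) := h.trans (min_le_right _ _)
  rw [← r.w_mul_sub_xc l] at h1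
  linarith [le_of_mul_le_mul_left h1 (r.w_pos l)]

lemma demand_eq_fbar_of_supply_lt {l : Fin n} {x : ℝ} (h : r.supply l x < r.fbar l) :
    r.demand l x = r.fbar l := by
  apply r.demand_eq_fbar
  by_contra! hx
  exact h.ne (r.supply_eq_fbar_s1 hx.le)

lemma supply_eq_fbar_of_demand_lt {l : Fin n} {x : ℝ} (h : r.demand l x < r.fbar l) :
    r.supply l x = r.fbar l := by
  apply r.supply_eq_fbar_s1
  by_contra! hx
  exact h.ne (r.demand_eq_fbar hx.le)

lemma eq_of_supply_lt {l : Fin n} {x : ℝ} (h : r.supply l x < r.fbar l) :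
    x = r.xbar l - r.supply l x / r.w l := by
  have h1 : r.supply l x = r.w l * (r.xbar l - x) :=
    min_eq_right (by by_contra! hx; exact h.ne (min_eq_left hx.le))
  rw [h1, mul_div_cancel_left₀ _ (r.w_pos l).ne']
  ring

lemma eq_of_demand_lt {l : Fin n} {x : ℝ} (h : r.demand l x < r.fbar l) :
    x = r.demand l x / r.v l := by
  have h1 : r.demand l x = r.v l * x :=
    min_eq_left (by by_contra! hx; exact h.ne (min_eq_right hx.le))
  rw [h1, mul_div_cancel_left₀ _ (r.v_pos l).ne']

lemma xc_le_congested {l : Fin n} {z : ℝ} (h : z ≤ r.fbar l) :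
    r.xc l ≤ r.xbar l - z / r.w l := by
  have : z / r.w l ≤ r.xbar l - r.xc l := by
    rw [div_le_iff₀ (r.w_pos l), mul_comm, w_mul_sub_xc]
    exact h
  linarith

lemma free_le_xc {l : Fin n} {z : ℝ} (h : z ≤ r.fbar l) : z / r.v l ≤ r.xc l :=
  div_le_div_of_nonneg_right h (r.v_pos l).le

lemma supply_congested {l : Fin n} {z : ℝ} (h : z ≤ r.fbar l) :
    r.supply l (r.xbar l - z / r.w l) = z := by
  rw [supply, sub_sub_cancel, mul_div_cancel₀ _ (r.w_pos l).ne', min_eq_right h]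

lemma demand_free {l : Fin n} {z : ℝ} (h : z ≤ r.fbar l) : r.demand l (z / r.v l) = z := by
  rw [demand, mul_div_cancel₀ _ (r.v_pos l).ne', min_eq_left h]

/-! ### Propagation of congestion and free flow; uniqueness -/

lemma outflow_le_demand (x : Fin n → ℝ) (l : Fin n) : r.outflow x l ≤ r.demand l (x l) := by
  unfold outflow
  split_ifs
  · exact min_le_left _ _
  · exact le_rfl

lemma outflow_succ (x : Fin n → ℝ) {k : ℕ} (hk : k < n) (h : k + 1 < n) :
    r.outflow x ⟨k, hk⟩ =
      min (r.demand ⟨k, hk⟩ (x ⟨k, hk⟩)) (r.supply ⟨k + 1, h⟩ (x ⟨k + 1, h⟩)) := by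
  simp [outflow, h]

lemma outflow_last (x : Fin n → ℝ) {k : ℕ} (hk : k < n) (h : k + 1 = n) :
    r.outflow x ⟨k, hk⟩ = r.demand ⟨k, hk⟩ (x ⟨k, hk⟩) := by
  simp [outflow, h]

lemma cap_eq (hn : 0 < n) {b : Fin n} (hb : ∀ l, l ≠ b → r.fbar b < r.fbar l) :
    r.cap hn = r.fbar b := by
  refine le_antisymm (Finset.inf'_le _ (Finset.mem_univ b)) (Finset.le_inf' _ _ fun l _ => ?_)
  rcases eq_or_ne l b with rfl | h
  · exact le_rfl
  · exact (hb l h).le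

/-- Congestion propagates downstream: a link whose supply equals the common flow `z < f̄_k` passes
this property on to the next link. -/
lemma supply_succ {x : Fin n → ℝ} {z : ℝ} (hout : ∀ l, r.outflow x l = z) {k : ℕ} (hk : k < n)
    (h : k + 1 < n) (hs : r.supply ⟨k, hk⟩ (x ⟨k, hk⟩) = z) (hz : z < r.fbar ⟨k, hk⟩) :
    r.supply ⟨k + 1, h⟩ (x ⟨k + 1, h⟩) = z := by
  have h1 := hout ⟨k, hk⟩
  rw [r.outflow_succ x hk h, r.demand_eq_fbar_of_supply_lt (hs.trans_lt hz)] at h1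
  rcases min_choice (r.fbar ⟨k, hk⟩) (r.supply ⟨k + 1, h⟩ (x ⟨k + 1, h⟩)) with h2 | h2
  · linarith
  · linarith

/-- Free flow propagates upstream: a link whose demand equals the common flow `z < f̄_{k+1}` passes
this property on to the previous link. -/
lemma demand_pred {x : Fin n → ℝ} {z : ℝ} (hout : ∀ l, r.outflow x l = z) {k : ℕ} (hk : k < n)
    (h : k + 1 < n) (hd : r.demand ⟨k + 1, h⟩ (x ⟨k + 1, h⟩) = z) (hz : z < r.fbar ⟨k + 1, h⟩) :
    r.demand ⟨k, hk⟩ (x ⟨k, hk⟩) = z := by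
  have h1 := hout ⟨k, hk⟩
  rw [r.outflow_succ x hk h, r.supply_eq_fbar_of_demand_lt (hd.trans_lt hz)] at h1
  rcases min_choice (r.demand ⟨k, hk⟩ (x ⟨k, hk⟩)) (r.fbar ⟨k + 1, h⟩) with h2 | h2
  · linarith
  · linarith

lemma supply_upstream {x : Fin n → ℝ} {z : ℝ} (hout : ∀ l, r.outflow x l = z) (hn : 0 < n)
    (h0 : r.supply ⟨0, hn⟩ (x ⟨0, hn⟩) = z) (k : ℕ) (hk : k < n)
    (hz : ∀ l : Fin n, (l : ℕ) < k → z < r.fbar l) :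
    r.supply ⟨k, hk⟩ (x ⟨k, hk⟩) = z := by
  induction k with
  | zero => exact h0
  | succ k ih =>
    exact r.supply_succ hout (by omega) hk
      (ih (by omega) fun l hl => hz l (by omega)) (hz _ (Nat.lt_succ_self k))

lemma demand_downstream {x : Fin n → ℝ} {z : ℝ} (hout : ∀ l, r.outflow x l = z) (j k : ℕ)
    (hk : k < n) (hj : k + j + 1 = n) (hz : ∀ l : Fin n, k < (l : ℕ) → z < r.fbar l) :
    r.demand ⟨k, hk⟩ (x ⟨k, hk⟩) = z := by
  induction j generalizing k with
  | zero => rw [← r.outflow_last x hk (by omega)]; exact hout _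
  | succ j ih =>
    have h : k + 1 < n := by omega
    exact r.demand_pred hout hk h
      (ih (k + 1) h (by omega) fun l hl => hz l (by omega)) (hz _ (Nat.lt_succ_self k))

/-- The common flow is the bottleneck capacity when it is supply-limited at the entry: a smaller
flow would leave every link congested, and the last one would then discharge at full capacity. -/
lemma flow_eq_fbar (hn : 0 < n) {b : Fin n} (hb : ∀ l, r.fbar b ≤ r.fbar l) {x : Fin n → ℝ}
    {z : ℝ} (hout : ∀ l, r.outflow x l = z) (h0 : r.supply ⟨0, hn⟩ (x ⟨0, hn⟩) = z) :
    z = r.fbar b := by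
  have hle : z ≤ r.fbar b :=
    (hout b).ge.trans ((r.outflow_le_demand x b).trans (r.demand_le b _))
  refine hle.eq_of_not_lt fun hlt => ?_
  have hz : ∀ l, z < r.fbar l := fun l => hlt.trans_le (hb l)
  have hlast : n - 1 < n := by omega
  have hs := r.supply_upstream hout hn h0 (n - 1) hlast fun l _ => hz l
  have hd := r.demand_eq_fbar_of_supply_lt (hs.trans_lt (hz _))
  have ho := r.outflow_last x hlast (by omega)
  rw [hout, hd] at ho
  exact (hz _).ne ho

lemma eq_congestedVector (hn : 0 < n) {b : Fin n} (hb : ∀ l, l ≠ b → r.fbar b < r.fbar l)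
    {φ : ℝ} (hφ : r.cap hn < φ) {x : Fin n → ℝ} (hx : r.Consistent hn φ x) :
    x = r.congestedVector hn b := by
  have hcap := r.cap_eq hn hb
  have hb' : ∀ l, r.fbar b ≤ r.fbar l := fun l => by
    rcases eq_or_ne l b with rfl | h
    · exact le_rfl
    · exact (hb l h).le
  obtain ⟨-, hout⟩ := hx
  have hle : r.inflow hn φ x ≤ r.fbar b :=
    (hout b).ge.trans ((r.outflow_le_demand x b).trans (r.demand_le b _))
  have h0 : r.supply ⟨0, hn⟩ (x ⟨0, hn⟩) = r.inflow hn φ x := by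
    rcases min_choice φ (r.supply ⟨0, hn⟩ (x ⟨0, hn⟩)) with h | h
    · have : r.inflow hn φ x = φ := h
      linarith
    · exact h.symm
  have hz := r.flow_eq_fbar hn hb' hout h0
  rw [hz] at hout h0
  have hs : ∀ l : Fin n, (l : ℕ) ≤ b → r.supply l (x l) = r.fbar b := fun l hl =>
    r.supply_upstream hout hn h0 l l.2 fun m hm => hb m (by rintro rfl; omega)
  have hd : ∀ l : Fin n, (b : ℕ) ≤ l → r.demand l (x l) = r.fbar b := fun l hl =>
    r.demand_downstream hout (n - 1 - l) l l.2 (by omega) fun m hm =>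
      hb m (by rintro rfl; omega)
  funext l
  rw [congestedVector, hcap]
  split_ifs with hl
  · have h1 := hs l hl.le
    have h2 := hb l (by rintro rfl; omega)
    have h3 := r.eq_of_supply_lt (h1.trans_lt h2)
    rwa [h1] at h3
  · rcases eq_or_ne l b with rfl | hne
    · exact le_antisymm (r.le_xc_of_supply (hs l le_rfl).ge) (r.xc_le_of_demand (hd l le_rfl).ge)
    · have h1 := hd l (by omega)
      have h3 := r.eq_of_demand_lt (h1.trans_lt (hb l hne))
      rwa [h1] at h3

end Helpers

/-! ### Consistency of the congested vector -/

section Congested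

variable {n : ℕ} (r : Route n) (hn : 0 < n) {b : Fin n}

lemma cap_le (l : Fin n) : r.cap hn ≤ r.fbar l := Finset.inf'_le _ (Finset.mem_univ l)

lemma cap_pos : 0 < r.cap hn := (Finset.lt_inf'_iff _).2 fun l _ => r.fbar_pos l

lemma congested_inBox : r.InBox (r.congestedVector hn b) := by
  intro l
  have hc := r.cap_le hn l
  have hp := r.cap_pos hn
  have hxc : 0 < r.xc l := div_pos (r.fbar_pos l) (r.v_pos l)
  unfold congestedVector
  split_ifs with hl
  · exact ⟨hxc.le.trans (r.xc_le_congested hc), sub_le_self _ (div_pos hp (r.w_pos l)).le⟩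
  · exact ⟨(div_pos hp (r.v_pos l)).le, (r.free_le_xc hc).trans (r.crit_lt_jam l).le⟩

lemma congested_supply_of_le (hcap : r.cap hn = r.fbar b) {l : Fin n} (hl : (l : ℕ) ≤ b) :
    r.supply l (r.congestedVector hn b l) = r.cap hn := by
  unfold congestedVector
  split_ifs with h
  · exact r.supply_congested (r.cap_le hn l)
  · obtain rfl : l = b := Fin.ext (by omega)
    rw [r.supply_eq_fbar_s1 (r.free_le_xc (r.cap_le hn l)), hcap]

lemma congested_supply_of_lt {l : Fin n} (hl : (b : ℕ) < l) :
    r.supply l (r.congestedVector hn b l) = r.fbar l := by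
  rw [congestedVector, if_neg (by omega)]
  exact r.supply_eq_fbar_s1 (r.free_le_xc (r.cap_le hn l))

lemma congested_demand_of_lt {l : Fin n} (hl : (l : ℕ) < b) :
    r.demand l (r.congestedVector hn b l) = r.fbar l := by
  rw [congestedVector, if_pos hl]
  exact r.demand_eq_fbar (r.xc_le_congested (r.cap_le hn l))

lemma congested_demand_of_le {l : Fin n} (hl : (b : ℕ) ≤ l) :
    r.demand l (r.congestedVector hn b l) = r.cap hn := by
  rw [congestedVector, if_neg (by omega)]
  exact r.demand_free (r.cap_le hn l)

lemma congested_outflow (hcap : r.cap hn = r.fbar b) (l : Fin n) :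
    r.outflow (r.congestedVector hn b) l = r.cap hn := by
  obtain ⟨k, hk⟩ := l
  rcases lt_or_ge k (b : ℕ) with hkb | hkb
  · rw [r.outflow_succ _ hk (by omega), r.congested_demand_of_lt hn hkb,
      r.congested_supply_of_le hn hcap (by exact hkb), min_eq_right (r.cap_le hn _)]
  · rcases Nat.lt_or_ge (k + 1) n with h | h
    · rw [r.outflow_succ _ hk h, r.congested_demand_of_le hn hkb,
        r.congested_supply_of_lt hn (by exact Nat.lt_succ_of_le hkb),
        min_eq_left (r.cap_le hn _)]
    · rw [r.outflow_last _ hk (by omega), r.congested_demand_of_le hn hkb]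

lemma congested_inflow (hcap : r.cap hn = r.fbar b) {φ : ℝ} (hφ : r.cap hn < φ) :
    r.inflow hn φ (r.congestedVector hn b) = r.cap hn := by
  rw [inflow, r.congested_supply_of_le hn hcap (Nat.zero_le _), min_eq_right hφ.le]

end Congested

end Route

/-- For a route with inflow demand `φ` strictly above the route
capacity `z̄ = min_l f̄_l`, the unique consistent density vector is congested
upstream of the bottleneck `b` and in free flow from `b` on, every link flow
equals `z̄`; in particular only the amount `z̄ < φ` of the demand is transferred. -/
theorem congested_unique_consistent {n : ℕ} (hn : 0 < n) (r : Route n) (b : Fin n)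
    (hb : ∀ l, l ≠ b → r.fbar b < r.fbar l)
    (φ : ℝ) (hφ : r.cap hn < φ) :
    (∀ x : Fin n → ℝ, r.Consistent hn φ x ↔ x = r.congestedVector hn b) ∧
    r.inflow hn φ (r.congestedVector hn b) = r.cap hn ∧
    (∀ l, r.outflow (r.congestedVector hn b) l = r.cap hn) := by
  have hcap := r.cap_eq hn hb
  have hin := r.congested_inflow hn hcap hφ
  have hout := r.congested_outflow hn hcap
  refine ⟨fun x => ⟨r.eq_congestedVector hn hb hφ, ?_⟩, hin, hout⟩
  rintro rfl
  exact ⟨r.congested_inBox hn, fun l => (hout l).trans hin.symm⟩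

end SelfishRouting
end

section
/- Let (R^W, x^W) be a Wardrop equilibrium of the routing game (G, Φ), where Φ ≤ Σ_{p=1}^N z̄_p. Then the support of R^W is contained in {1,…,k}, where k := min{ p : Φ − Σ_{j=1}^p z̄_j ≤ 0 }. -/
/-!
If route `q` has a link whose density exceeds the critical one, then its flow is at least the
route capacity `z̄_q`: a congested link carries less than its own capacity, so it must be held
back by the supply of the next link; following this downstream, the chain of congested links
cannot reach the end of the route (the last link discharges at its demand), hence it stops at a
link operated exactly at capacity (`cap_le_flow`). In particular no link is at jam density, since
that would force zero flow, so travel times are bounded below by free-flow travel times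
(`tauF_le_tau`).

Now suppose a route `p > k` is used. Every route `q ≤ k` satisfies
`τ_q ≥ τ_p ≥ τ_p^F > τ_q^F`, so it contains a congested link and `Φ R_q ≥ z̄_q`. Summing over
`q ≤ k` gives `Φ ∑_{q ≤ k} R_q ≥ Φ`, which leaves nothing for route `p`.
-/

/-!
Selfish routing on a parallel network with supply/demand (CTM) link mechanics.
A parallel network has `N` routes joining a single origin-destination pair;
route `p` has links `0, …, n p − 1` (paper indices `1, …, n_p`).
-/

open Finset

noncomputable section

namespace SelfishRouting

/-- A parallel network with `N` routes; route `p` has `n p` links, each specified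
by jam density `xbar`, capacity `fbar`, free-flow speed `v` and length `L`, with
the critical density `fbar p l / v p l` strictly below the jam density. -/
structure Network (N : ℕ) where
  n : Fin N → ℕ
  n_pos : ∀ p, 0 < n p
  xbar : (p : Fin N) → Fin (n p) → ℝ
  fbar : (p : Fin N) → Fin (n p) → ℝ
  v : (p : Fin N) → Fin (n p) → ℝ
  L : (p : Fin N) → Fin (n p) → ℝ
  xbar_pos : ∀ p l, 0 < xbar p l
  fbar_pos : ∀ p l, 0 < fbar p l
  v_pos : ∀ p l, 0 < v p l
  L_pos : ∀ p l, 0 < L p l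
  crit_lt_jam : ∀ p l, fbar p l / v p l < xbar p l

namespace Network

variable {N : ℕ} (G : Network N)

/-- critical density of link `l` of route `p`. -/
def xc (p : Fin N) (l : Fin (G.n p)) : ℝ := G.fbar p l / G.v p l

/-- congestion-wave speed of link `l` of route `p`. -/
def w (p : Fin N) (l : Fin (G.n p)) : ℝ := G.fbar p l / (G.xbar p l - G.xc p l)

/-- supply function of link `l` of route `p`. -/
def supply (p : Fin N) (l : Fin (G.n p)) (x : ℝ) : ℝ :=
  min (G.fbar p l) (G.w p l * (G.xbar p l - x))

/-- demand function of link `l` of route `p`. -/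
def demand (p : Fin N) (l : Fin (G.n p)) (x : ℝ) : ℝ :=
  min (G.v p l * x) (G.fbar p l)

/-- route capacity `z̄_p = min_{l ∈ p} f̄_l`. -/
def cap (p : Fin N) : ℝ :=
  (Finset.univ : Finset (Fin (G.n p))).inf' ⟨⟨0, G.n_pos p⟩, Finset.mem_univ _⟩ (G.fbar p)

/-- the first link of route `p`. -/
def first (p : Fin N) : Fin (G.n p) := ⟨0, G.n_pos p⟩

/-- flow `f_{0_p}` entering the first link of route `p`, under inflow demand `φ`. -/
def inflow (p : Fin N) (φ : ℝ) (x : Fin (G.n p) → ℝ) : ℝ :=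
  min φ (G.supply p (G.first p) (x (G.first p)))

/-- flow `f_{(l+1)_p}` leaving link `l` of route `p`. -/
def outflow (p : Fin N) (x : Fin (G.n p) → ℝ) (l : Fin (G.n p)) : ℝ :=
  if h : (l : ℕ) + 1 < G.n p then
    min (G.demand p l (x l)) (G.supply p ⟨(l : ℕ) + 1, h⟩ (x ⟨(l : ℕ) + 1, h⟩))
  else G.demand p l (x l)

/-- `x` lies in the box `∏ [0, x̄]`. -/
def InBox (x : ∀ p : Fin N, Fin (G.n p) → ℝ) : Prop :=
  ∀ p l, 0 ≤ x p l ∧ x p l ≤ G.xbar p l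

/-- `R` is a routing vector: nonnegative entries summing to one. -/
def RoutingVector (R : Fin N → ℝ) : Prop :=
  (∀ p, 0 ≤ R p) ∧ ∑ p, R p = 1

/-- `x` is a consistent density vector for routing vector `R` under exogenous flow
`Φ`: on each route all link flows coincide (route `p` gets inflow demand `Φ R_p`). -/
def Consistent (Φ : ℝ) (R : Fin N → ℝ) (x : ∀ p : Fin N, Fin (G.n p) → ℝ) : Prop :=
  G.InBox x ∧ ∀ p l, G.outflow p (x p) l = G.inflow p (Φ * R p) (x p)

/-- a traffic assignment: a routing vector with a consistent density vector. -/
def Assignment (Φ : ℝ) (R : Fin N → ℝ) (x : ∀ p : Fin N, Fin (G.n p) → ℝ) : Prop :=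
  RoutingVector R ∧ G.Consistent Φ R x

/-- an assignment is fully transferring when the (common) flow on each route `p`
equals the full inflow demand `Φ R_p`; otherwise it is partially transferring. -/
def FullyTransferring (Φ : ℝ) (R : Fin N → ℝ) (x : ∀ p : Fin N, Fin (G.n p) → ℝ) : Prop :=
  ∀ p, G.inflow p (Φ * R p) (x p) = Φ * R p

/-- travel time of link `l` of route `p` at density `x` (equal to `L/v` at `x = 0`). -/
def tauLink (p : Fin N) (l : Fin (G.n p)) (x : ℝ) : ℝ :=
  if x = 0 then G.L p l / G.v p l
  else G.L p l * x / min (G.v p l * x) (G.w p l * (G.xbar p l - x))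

/-- travel time of route `p` at the density vector `x`. -/
def tau (p : Fin N) (x : ∀ q : Fin N, Fin (G.n q) → ℝ) : ℝ :=
  ∑ l, G.tauLink p l (x p l)

/-- free-flow travel time `τ_p^F` of route `p`. -/
def tauF (p : Fin N) : ℝ := ∑ l, G.L p l / G.v p l

/-- maximal travel time `τ_p^S` of route `p`, given its bottleneck link `b`. -/
def tauS (p : Fin N) (b : Fin (G.n p)) : ℝ :=
  ∑ l : Fin (G.n p),
    if (l : ℕ) < (b : ℕ) then G.tauLink p l (G.xbar p l - G.cap p / G.w p l)
    else G.L p l / G.v p l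

/-- Wardrop equilibrium: a traffic assignment in which every used route has
minimal travel time. -/
def Wardrop (Φ : ℝ) (R : Fin N → ℝ) (x : ∀ p : Fin N, Fin (G.n p) → ℝ) : Prop :=
  G.Assignment Φ R x ∧ ∀ p, 0 < R p → ∀ q, G.tau p x ≤ G.tau q x

/-- the set `U = {p ≤ k : τ_p^S ≤ τ_j^F for some j ≤ k}`, given the index `k`
and the bottleneck links `b`. -/
def Uset (k : Fin N) (b : ∀ p : Fin N, Fin (G.n p)) : Set (Fin N) :=
  {p | p ≤ k ∧ ∃ j ≤ k, G.tauS p (b p) ≤ G.tauF j}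

/-- social optimum: a traffic assignment respecting the route capacity
constraints and minimizing the total travel time among all such assignments. -/
def SocialOptimum (Φ : ℝ) (R : Fin N → ℝ) (x : ∀ p : Fin N, Fin (G.n p) → ℝ) : Prop :=
  G.Assignment Φ R x ∧ (∀ p, Φ * R p ≤ G.cap p) ∧
  ∀ R' x', G.Assignment Φ R' x' → (∀ p, Φ * R' p ≤ G.cap p) →
    ∑ p, Φ * R p * G.tau p x ≤ ∑ p, Φ * R' p * G.tau p x'

end Network

end SelfishRouting

end

namespace SelfishRouting

namespace Network

variable {N : ℕ} (G : Network N)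

lemma v_mul_xc (p : Fin N) (l : Fin (G.n p)) : G.v p l * G.xc p l = G.fbar p l :=
  mul_div_cancel₀ _ (G.v_pos p l).ne'

lemma gap_pos (p : Fin N) (l : Fin (G.n p)) : 0 < G.xbar p l - G.xc p l :=
  sub_pos.2 (G.crit_lt_jam p l)

lemma w_pos (p : Fin N) (l : Fin (G.n p)) : 0 < G.w p l :=
  div_pos (G.fbar_pos p l) (G.gap_pos p l)

lemma w_mul_gap (p : Fin N) (l : Fin (G.n p)) :
    G.w p l * (G.xbar p l - G.xc p l) = G.fbar p l :=
  div_mul_cancel₀ _ (G.gap_pos p l).ne'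

lemma cap_le (p : Fin N) (l : Fin (G.n p)) : G.cap p ≤ G.fbar p l :=
  Finset.inf'_le _ (Finset.mem_univ l)

lemma cap_pos (p : Fin N) : 0 < G.cap p :=
  (Finset.lt_inf'_iff _).2 fun l _ => G.fbar_pos p l

lemma supply_lt (p : Fin N) (l : Fin (G.n p)) {y : ℝ} (hy : G.xc p l < y) :
    G.supply p l y < G.fbar p l := by
  refine (min_le_right _ _).trans_lt ?_
  rw [← G.w_mul_gap p l]
  exact mul_lt_mul_of_pos_left (by linarith) (G.w_pos p l)

lemma demand_eq (p : Fin N) (l : Fin (G.n p)) {y : ℝ} (hy : G.xc p l ≤ y) :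
    G.demand p l y = G.fbar p l := by
  refine min_eq_right ?_
  rw [← G.v_mul_xc p l]
  exact mul_le_mul_of_nonneg_left hy (G.v_pos p l).le

lemma fbar_le_wave (p : Fin N) (l : Fin (G.n p)) {y : ℝ} (hy : y ≤ G.xc p l) :
    G.fbar p l ≤ G.w p l * (G.xbar p l - y) := by
  rw [← G.w_mul_gap p l]
  exact mul_le_mul_of_nonneg_left (by linarith) (G.w_pos p l).le

lemma supply_eq (p : Fin N) (l : Fin (G.n p)) {y : ℝ} (hy : y ≤ G.xc p l) :
    G.supply p l y = G.fbar p l :=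
  min_eq_left (G.fbar_le_wave p l hy)

lemma tauLink_free (p : Fin N) (l : Fin (G.n p)) {y : ℝ} (hy : y ≤ G.xc p l) :
    G.tauLink p l y = G.L p l / G.v p l := by
  unfold tauLink
  split_ifs with h
  · rfl
  · have hv : G.v p l * y ≤ G.w p l * (G.xbar p l - y) := by
      refine le_trans ?_ (G.fbar_le_wave p l hy)
      rw [← G.v_mul_xc p l]
      exact mul_le_mul_of_nonneg_left hy (G.v_pos p l).le
    rw [min_eq_left hv, mul_div_mul_right _ _ h]

/-- The strict bound `y < x̄` is needed: at jam density the quotient defining `tauLink` is a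
division by zero. -/
lemma le_tauLink (p : Fin N) (l : Fin (G.n p)) {y : ℝ} (h0 : 0 ≤ y) (hy : y < G.xbar p l) :
    G.L p l / G.v p l ≤ G.tauLink p l y := by
  unfold tauLink
  split_ifs with h
  · exact le_rfl
  · have hy0 : 0 < y := lt_of_le_of_ne h0 (Ne.symm h)
    rw [← mul_div_mul_right (G.L p l) (G.v p l) h]
    refine div_le_div_of_nonneg_left (mul_pos (G.L_pos p l) hy0).le ?_ (min_le_left _ _)
    exact lt_min (mul_pos (G.v_pos p l) hy0) (mul_pos (G.w_pos p l) (sub_pos.2 hy))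

/-- On a route whose link flows all coincide, no link receives more than its supply. -/
lemma flow_le_supply (p : Fin N) (φ : ℝ) (y : Fin (G.n p) → ℝ)
    (hc : ∀ l, G.outflow p y l = G.inflow p φ y) (l : Fin (G.n p)) :
    G.inflow p φ y ≤ G.supply p l (y l) := by
  obtain ⟨m, hm⟩ := l
  cases m with
  | zero => exact min_le_right _ _
  | succ m =>
    rw [← hc ⟨m, by omega⟩, outflow, dif_pos hm]
    exact min_le_right _ _

/-- A congested link forces the route flow to be at least the route capacity. -/
lemma cap_le_flow (p : Fin N) (φ : ℝ) (y : Fin (G.n p) → ℝ)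
    (hc : ∀ l, G.outflow p y l = G.inflow p φ y) (l : Fin (G.n p)) (hl : G.xc p l < y l) :
    G.cap p ≤ G.inflow p φ y := by
  -- Induction on the number of links downstream of `l`.
  obtain ⟨d, hd⟩ : ∃ d, d = G.n p - (l : ℕ) := ⟨_, rfl⟩
  induction d generalizing l with
  | zero => have := l.2; omega
  | succ d ih =>
    have hlt : G.inflow p φ y < G.fbar p l :=
      (G.flow_le_supply p φ y hc l).trans_lt (G.supply_lt p l hl)
    have ho := hc l
    unfold outflow at ho
    rw [G.demand_eq p l hl.le] at ho
    split_ifs at ho with h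
    · rcases lt_or_ge (G.xc p ⟨l + 1, h⟩) (y ⟨l + 1, h⟩) with h1 | h1
      · exact ih ⟨l + 1, h⟩ h1 (by simp only; omega)
      · rw [G.supply_eq p _ h1] at ho
        rw [← ho]
        exact le_min (G.cap_le p _) (G.cap_le p _)
    · exact absurd ho hlt.ne'

/-- No link of a consistent route is at jam density, as the flow would vanish there. -/
lemma lt_xbar (p : Fin N) (φ : ℝ) (y : Fin (G.n p) → ℝ)
    (hc : ∀ l, G.outflow p y l = G.inflow p φ y) (l : Fin (G.n p)) : y l < G.xbar p l := by
  rcases lt_or_ge (G.xc p l) (y l) with h | h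
  · have h1 := G.cap_le_flow p φ y hc l h
    have h2 := (G.flow_le_supply p φ y hc l).trans (min_le_right _ _)
    have h3 : 0 < G.w p l * (G.xbar p l - y l) := (G.cap_pos p).trans_le (h1.trans h2)
    exact sub_pos.1 (pos_of_mul_pos_right h3 (G.w_pos p l).le)
  · exact h.trans_lt (G.crit_lt_jam p l)

lemma tauF_le_tau {Φ : ℝ} {R : Fin N → ℝ} {x : ∀ p : Fin N, Fin (G.n p) → ℝ}
    (hx : G.Consistent Φ R x) (p : Fin N) : G.tauF p ≤ G.tau p x :=
  Finset.sum_le_sum fun l _ =>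
    G.le_tauLink p l (hx.1 p l).1 (G.lt_xbar p _ (x p) (hx.2 p) l)

/-- A route slower than free flow has inflow demand at least its capacity. -/
lemma cap_le_of_tauF_lt {Φ : ℝ} {R : Fin N → ℝ} {x : ∀ p : Fin N, Fin (G.n p) → ℝ}
    (hx : G.Consistent Φ R x) (q : Fin N) (h : G.tauF q < G.tau q x) :
    G.cap q ≤ Φ * R q := by
  obtain ⟨l, -, hl⟩ := Finset.exists_lt_of_sum_lt h
  have hcong : G.xc q l < x q l := by
    by_contra! hle
    exact hl.ne' (G.tauLink_free q l hle)
  exact (G.cap_le_flow q _ (x q) (hx.2 q) l hcong).trans (min_le_left _ _)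

end Network

/-- Lemma 2. At a Wardrop equilibrium of the routing game
`(G, Φ)` with `Φ` not exceeding the min-cut capacity, the support of the routing
vector is contained in `{1, …, k}`, where `k` is the least index such that
`Φ − Σ_{j ≤ k} z̄_j ≤ 0`. -/
theorem wardrop_support_subset {N : ℕ} (G : Network N)
    (Φ : ℝ) (hΦ : 0 < Φ) (hmc : Φ ≤ ∑ p, G.cap p)
    (b : ∀ p : Fin N, Fin (G.n p))
    (hb : ∀ p l, l ≠ b p → G.fbar p (b p) < G.fbar p l)
    (hord : ∀ p q : Fin N, p < q → G.tauF p < G.tauF q)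
    (k : Fin N)
    (hk : Φ ≤ ∑ q ∈ Finset.univ.filter (fun q => q ≤ k), G.cap q)
    (hkmin : ∀ p, p < k → ¬ Φ ≤ ∑ q ∈ Finset.univ.filter (fun q => q ≤ p), G.cap q)
    (R : Fin N → ℝ) (x : ∀ p : Fin N, Fin (G.n p) → ℝ)
    (hW : G.Wardrop Φ R x) :
    ∀ p, 0 < R p → p ≤ k := by
  intro p hp
  by_contra! hkp
  obtain ⟨⟨⟨hR0, hR1⟩, hx⟩, hmin⟩ := hW
  have hcap : ∀ q ≤ k, G.cap q ≤ Φ * R q := fun q hq =>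
    G.cap_le_of_tauF_lt hx q <|
      (hord q p (hq.trans_lt hkp)).trans_le ((G.tauF_le_tau hx p).trans (hmin p hp q))
  have hle : Φ ≤ Φ * ∑ q ∈ Finset.univ.filter (fun q => q ≤ k), R q := by
    rw [Finset.mul_sum]
    exact hk.trans (Finset.sum_le_sum fun q hq => hcap q (Finset.mem_filter.1 hq).2)
  have hlt : ∑ q ∈ Finset.univ.filter (fun q => q ≤ k), R q < ∑ q, R q :=
    Finset.sum_lt_sum_of_subset (Finset.filter_subset _ _) (Finset.mem_univ p)
      (by simpa using hkp) hp (fun q _ _ => hR0 q)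
  rw [hR1] at hlt
  nlinarith

end SelfishRouting
end

section
/- For a route with inflow demand φ and any consistent density vector x, the common value of the link flows f_0 = f_1 = ⋯ = f_n equals min{φ, z̄}, where z̄ := min_l f̄_l is the route capacity; in particular, the transferred flow never exceeds the route capacity, and it equals the full demand φ if and only if φ ≤ z̄. -/
/-!
Let `z` be the common flow. It is at most `φ` by definition of the inflow, and at most every
`f̄_l` since link `l` cannot send more than its capacity, so `z ≤ min φ z̄`.

For the reverse inequality, suppose `z < φ` and `z < z̄`. The inflow is then limited by the supply
of the first link, so that link is congested; a congested link has maximal demand `f̄_l > z`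
(`Route.demand_eq_of_supply_lt`), so its outflow must be limited by the supply of the next link,
which is therefore congested as well. Congestion thus propagates to the last link
(`Route.supply_eq_of_lt`), whose outflow is its demand `f̄_n > z`, a contradiction.
-/

/-!
Selfish routing on a single route with supply/demand (CTM) link mechanics.
A route consists of links `0, …, n-1` (paper indices `1, …, n`).
-/

open Finset

namespace SelfishRouting

namespace Route

variable {n : ℕ} (r : Route n)

/-- A link whose supply is below capacity has density above critical, hence maximal demand. -/
lemma demand_eq_of_supply_lt (l : Fin n) (x : ℝ) (h : r.supply l x < r.fbar l) :
    r.demand l x = r.fbar l := by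
  have hgap : 0 < r.xbar l - r.xc l := sub_pos.2 (r.crit_lt_jam l)
  have hw : 0 < r.w l := div_pos (r.fbar_pos l) hgap
  have hlt : r.w l * (r.xbar l - x) < r.fbar l :=
    (min_lt_iff.1 h).resolve_left (lt_irrefl _)
  have hwf : r.w l * (r.xbar l - r.xc l) = r.fbar l := div_mul_cancel₀ _ hgap.ne'
  rw [← hwf] at hlt
  have hx : r.xc l < x := by
    have := lt_of_mul_lt_mul_left hlt hw.le
    linarith
  have hvx : r.fbar l < x * r.v l := (div_lt_iff₀ (r.v_pos l)).1 hx
  exact min_eq_right (by linarith)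

lemma outflow_le_fbar (x : Fin n → ℝ) (l : Fin n) : r.outflow x l ≤ r.fbar l := by
  unfold outflow
  split_ifs
  · exact (min_le_left _ _).trans (min_le_right _ _)
  · exact min_le_right _ _

lemma cap_le_fbar (hn : 0 < n) (l : Fin n) : r.cap hn ≤ r.fbar l :=
  Finset.inf'_le _ (Finset.mem_univ l)

/-- If the flow is below both the demand and the capacity of the route, every link is
congested: its supply is exactly the flow. -/
lemma supply_eq_of_lt (hn : 0 < n) (φ : ℝ) (x : Fin n → ℝ) (hx : r.Consistent hn φ x)
    (hφ : r.inflow hn φ x < φ) (hc : r.inflow hn φ x < r.cap hn) :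
    ∀ (k : ℕ) (hk : k < n), r.supply ⟨k, hk⟩ (x ⟨k, hk⟩) = r.inflow hn φ x := by
  intro k
  induction k with
  | zero =>
    intro hk
    rcases min_choice φ (r.supply ⟨0, hn⟩ (x ⟨0, hn⟩)) with h | h
    · exact absurd h hφ.ne
    · exact h.symm
  | succ k ih =>
    intro hk
    have hk' : k < n := Nat.lt_of_succ_lt hk
    have hlt : r.inflow hn φ x < r.fbar ⟨k, hk'⟩ := hc.trans_le (r.cap_le_fbar hn _)
    have hd := r.demand_eq_of_supply_lt ⟨k, hk'⟩ (x ⟨k, hk'⟩) ((ih hk').trans_lt hlt)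
    have ho := hx.2 ⟨k, hk'⟩
    rw [outflow, dif_pos hk, hd] at ho
    rcases min_choice (r.fbar ⟨k, hk'⟩) (r.supply ⟨k + 1, hk⟩ (x ⟨k + 1, hk⟩)) with h | h
    · exact absurd (h.symm.trans ho) hlt.ne'
    · exact h.symm.trans ho

lemma inflow_eq_min (hn : 0 < n) (φ : ℝ) (x : Fin n → ℝ) (hx : r.Consistent hn φ x) :
    r.inflow hn φ x = min φ (r.cap hn) := by
  have hle : r.inflow hn φ x ≤ r.cap hn :=
    Finset.le_inf' _ _ fun l _ => (hx.2 l).symm.trans_le (r.outflow_le_fbar x l)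
  refine le_antisymm (le_min (min_le_left _ _) hle) ?_
  by_contra! h
  obtain ⟨hφ, hc⟩ := lt_min_iff.1 h
  -- The last link sends its full demand, which equals its capacity.
  have hk : n - 1 < n := by omega
  have hlt : r.inflow hn φ x < r.fbar ⟨n - 1, hk⟩ := hc.trans_le (r.cap_le_fbar hn _)
  have hs := r.supply_eq_of_lt hn φ x hx hφ hc (n - 1) hk
  have hd := r.demand_eq_of_supply_lt _ _ (hs.trans_lt hlt)
  have ho := hx.2 ⟨n - 1, hk⟩
  rw [outflow, dif_neg (by simp only; omega), hd] at ho
  exact hlt.ne' ho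

end Route

end SelfishRouting

namespace SelfishRouting

/-- For any inflow demand `φ ≥ 0` and any consistent density
vector `x`, the common value of the link flows equals `min {φ, z̄}`; in
particular the transferred flow never exceeds the route capacity, and it equals
the full demand `φ` iff `φ ≤ z̄`. -/
theorem transferred_flow_eq_min {n : ℕ} (hn : 0 < n) (r : Route n) (b : Fin n)
    (hb : ∀ l, l ≠ b → r.fbar b < r.fbar l)
    (φ : ℝ) (hφ0 : 0 ≤ φ)
    (x : Fin n → ℝ) (hx : r.Consistent hn φ x) :
    r.inflow hn φ x = min φ (r.cap hn) ∧
    (∀ l, r.outflow x l = min φ (r.cap hn)) ∧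
    r.inflow hn φ x ≤ r.cap hn ∧
    (r.inflow hn φ x = φ ↔ φ ≤ r.cap hn) := by
  have h := r.inflow_eq_min hn φ x hx
  refine ⟨h, fun l => (hx.2 l).trans h, h.trans_le (min_le_right _ _), ?_⟩
  rw [h]
  exact min_eq_left_iff

end SelfishRouting
end
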